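/- arXiv:2405.17955 — 2 statements merged into one kernel-verified Lean document; each statement's English description precedes it below -/
import Mathlib

section
/- Let Z be a measurable space, μ_prior a probability measure on Z, and Φ : Z → ℝ measurable with 𝒵 := ∫ exp(−Φ(z)) dμ_prior(z) satisfying 0 < 𝒵 < ∞. Define the probability measure μ^y on Z by dμ^y/dμ_prior = exp(−Φ)/𝒵. Then for every probability measure μ on Z that is absolutely continuous with respect to μ_prior, with Φ integrable with respect to μ and KL(μ‖μ_prior) < ∞, one has ∫ Φ dμ + KL(μ‖μ_prior) = KL(μ‖μ^y) − log 𝒵. -/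
open MeasureTheory Matrix
open scoped ENNReal Classical

/-- Weighted squared norm `‖x‖_B² = ⟪x, B⁻¹ x⟫` on `ℝ^d`. -/
noncomputable def wNormSq {d : ℕ} (B : Matrix (Fin d) (Fin d) ℝ) (x : Fin d → ℝ) : ℝ :=
  x ⬝ᵥ (B⁻¹ *ᵥ x)

/-- `γ` is a coupling of `ν` and `μ`: its marginals are `ν` and `μ`. -/
def IsCoupling {X : Type*} [MeasurableSpace X] (γ : Measure (X × X)) (ν μ : Measure X) : Prop :=
  γ.map Prod.fst = ν ∧ γ.map Prod.snd = μ

/-- Optimal transport cost: infimum over couplings of the integrated cost. -/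
noncomputable def transportInf {X : Type*} [MeasurableSpace X] (c : X → X → ℝ)
    (ν μ : Measure X) : ℝ≥0∞ :=
  ⨅ (γ : Measure (X × X)) (_ : IsCoupling γ ν μ), ∫⁻ p, ENNReal.ofReal (c p.1 p.2) ∂γ

/-- Squared weighted Wasserstein-2 distance with weight matrix `B`. -/
noncomputable def W2sqW {d : ℕ} (B : Matrix (Fin d) (Fin d) ℝ)
    (ν μ : Measure (Fin d → ℝ)) : ℝ≥0∞ :=
  transportInf (fun x y => wNormSq B (x - y)) ν μ

/-- Squared Euclidean Wasserstein-2 distance. -/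
noncomputable def W2sqE {d : ℕ} (ν μ : Measure (Fin d → ℝ)) : ℝ≥0∞ :=
  transportInf (fun x y => ∑ i, (x i - y i) ^ 2) ν μ

/-- Squared Wasserstein-2 distance on `ℝ`. -/
noncomputable def W2sqR (ν μ : Measure ℝ) : ℝ≥0∞ :=
  transportInf (fun a b => (a - b) ^ 2) ν μ

/-- The slicing projection `x ↦ ⟪A x, θ⟫`. -/
noncomputable def sliceMap {d : ℕ} (A : Matrix (Fin d) (Fin d) ℝ) (θ : Fin d → ℝ)
    (x : Fin d → ℝ) : ℝ :=
  (A *ᵥ x) ⬝ᵥ θ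

/-- Squared sliced Wasserstein-2 distance, weighted by `A = Γ^{-1/2}`, with slicing
directions distributed according to `σ`. -/
noncomputable def SW2sq {d : ℕ} (σ : Measure (Fin d → ℝ)) (A : Matrix (Fin d) (Fin d) ℝ)
    (ν μ : Measure (Fin d → ℝ)) : ℝ≥0∞ :=
  ∫⁻ θ, W2sqR (ν.map (sliceMap A θ)) (μ.map (sliceMap A θ)) ∂σ

/-- `σ` is the rotation-invariant uniform probability measure on the unit sphere `S^{d-1}`. -/
def IsUniformSphere {d : ℕ} (σ : Measure (Fin d → ℝ)) : Prop :=
  IsProbabilityMeasure σ ∧ σ {θ | ∑ i, (θ i) ^ 2 = 1} = 1 ∧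
    ∀ R : Matrix (Fin d) (Fin d) ℝ, R * Rᵀ = 1 → σ.map (fun θ => R *ᵥ θ) = σ

/-- Convolution of two measures on `ℝ^d`: pushforward of the product under addition. -/
noncomputable def convAdd {d : ℕ} (η μ : Measure (Fin d → ℝ)) : Measure (Fin d → ℝ) :=
  (η.prod μ).map fun p => p.1 + p.2

/-- Kullback–Leibler divergence, valued in `ℝ≥0∞`. -/
noncomputable def KLe {Z : Type*} [MeasurableSpace Z] (μ ρ : Measure Z) : ℝ≥0∞ :=
  if μ ≪ ρ ∧ Integrable (fun z => Real.log (μ.rnDeriv ρ z).toReal) μ then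
    ENNReal.ofReal (∫ z, Real.log (μ.rnDeriv ρ z).toReal ∂μ)
  else ⊤

/-- with `dμ^y/dμ_prior = exp(−Φ)/𝒵`, for every probability measure
`μ ≪ μ_prior` with `Φ` `μ`-integrable and finite `KL(μ‖μ_prior)`,
`∫ Φ dμ + KL(μ‖μ_prior) = KL(μ‖μ^y) − log 𝒵`. -/
theorem gibbs_identity {Z : Type*} [MeasurableSpace Z]
    (μprior : Measure Z) [IsProbabilityMeasure μprior]
    (Φ : Z → ℝ) (hΦ : Measurable Φ)
    (hZfin : Integrable (fun z => Real.exp (-Φ z)) μprior)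
    (hZpos : 0 < ∫ z, Real.exp (-Φ z) ∂μprior)
    (μy : Measure Z)
    (hμy : μy = μprior.withDensity fun z =>
      ENNReal.ofReal (Real.exp (-Φ z) / ∫ z', Real.exp (-Φ z') ∂μprior))
    (μ : Measure Z) [IsProbabilityMeasure μ] (hac : μ ≪ μprior)
    (hΦμ : Integrable Φ μ)
    (hKL : Integrable (fun z => Real.log (μ.rnDeriv μprior z).toReal) μ) :
    ∫ z, Φ z ∂μ + ∫ z, Real.log (μ.rnDeriv μprior z).toReal ∂μ
      = ∫ z, Real.log (μ.rnDeriv μy z).toReal ∂μ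
        - Real.log (∫ z, Real.exp (-Φ z) ∂μprior) := by
  -- `μy` is by definition the exponential tilting of `μprior` by `-Φ`.
  have hμy' : μy = μprior.tilted (fun z => -Φ z) := hμy
  have h := integral_llr_tilted_right (f := fun z => -Φ z) hac hΦμ.neg hZfin hKL
  simp only [llr_def, ← hμy', integral_neg] at h
  linarith
end

section
/- Let Z be a measurable space, μ_prior a probability measure on Z, Γ a symmetric positive-definite real d×d matrix, y ∈ ℝ^d, and G : Z → ℝ^d measurable. Set Φ(z) := (1/2)‖y − G(z)‖_Γ² and 𝒵 := ∫ exp(−Φ(z)) dμ_prior(z), and note 0 < 𝒵 ≤ 1. Define the probability measure μ^y by dμ^y/dμ_prior = exp(−Φ)/𝒵. Then μ^y is the unique minimizer of the functional J(μ) := ∫ Φ dμ + KL(μ‖μ_prior) over probability measures μ on Z (with value +∞ when μ is not absolutely continuous with respect to μ_prior or KL(μ‖μ_prior) = ∞): J(μ) ≥ J(μ^y) = −log 𝒵 for all probability measures μ, with equality if and only if μ = μ^y. -/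
/-!
The posterior is the exponential tilt `ρ.tilted (-Φ)` of the prior `ρ`. For a probability measure
`μ` with `∫ Φ dμ` and `KL(μ‖ρ)` finite, the chain rule for densities gives
`log dμ/dμ^y = log dμ/dρ + Φ + log 𝒵`, and integrating against `μ` yields the Gibbs variational
identity `J(μ) = KL(μ‖μ^y) - log 𝒵` (`Jgibbs_eq_klDiv_tilted`). Since `t * exp (-t)` is bounded on
`t ≥ 0`, the posterior itself lies in this finite domain, so `J(μ^y) = -log 𝒵` (`Jgibbs_tilted`).
Everything then follows from Gibbs' inequality `KL(μ‖μ^y) ≥ 0`, with equality iff `μ = μ^y`; outside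
the finite domain `J(μ) = ∞ > J(μ^y)`.
-/


open MeasureTheory Matrix
open scoped ENNReal Classical

/-- The Gibbs free-energy functional `J(μ) = ∫ Φ dμ + KL(μ‖μ_prior)`. -/
noncomputable def Jgibbs {Z : Type*} [MeasurableSpace Z] (μprior : Measure Z) (Φ : Z → ℝ)
    (μ : Measure Z) : ℝ≥0∞ :=
  ∫⁻ z, ENNReal.ofReal (Φ z) ∂μ + KLe μ μprior

/-- Nonnegativity of the weighted squared norm: `B⁻¹` is again positive definite. -/
lemma wNormSq_nonneg {d : ℕ} {B : Matrix (Fin d) (Fin d) ℝ} (hB : B.PosDef) (x : Fin d → ℝ) :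
    0 ≤ wNormSq B x := by
  have h := hB.inv.posSemidef.dotProduct_mulVec_nonneg x
  simpa [wNormSq] using h

lemma measurable_wNormSq {d : ℕ} (B : Matrix (Fin d) (Fin d) ℝ) : Measurable (wNormSq B) := by
  unfold wNormSq dotProduct mulVec dotProduct
  fun_prop

section Gibbs

variable {Z : Type*} [MeasurableSpace Z] {ρ : Measure Z} [IsProbabilityMeasure ρ] {Φ : Z → ℝ}

/-- Since the potential is nonnegative, its Gibbs weight is bounded by `1`. -/
lemma integrable_exp_neg (hm : Measurable Φ) (h0 : ∀ z, 0 ≤ Φ z) :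
    Integrable (fun z => Real.exp (-Φ z)) ρ := by
  refine Integrable.of_bound (by fun_prop) 1 (Filter.Eventually.of_forall fun z => ?_)
  simpa using h0 z

/-- For probability measures the total-mass correction in `klDiv` vanishes. -/
lemma KLe_eq_klDiv (μ : Measure Z) [IsProbabilityMeasure μ] :
    KLe μ ρ = InformationTheory.klDiv μ ρ := by
  rw [KLe, InformationTheory.klDiv_def]
  simp [llr_def]

/-- The Gibbs variational identity on the domain where the free energy is finite: the free
energy exceeds `-log 𝒵` exactly by the relative entropy with respect to the Gibbs measure. -/
lemma Jgibbs_eq_klDiv_tilted (hm : Measurable Φ) (h0 : ∀ z, 0 ≤ Φ z)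
    (hZ : ∫ z, Real.exp (-Φ z) ∂ρ ≤ 1)
    (μ : Measure Z) [IsProbabilityMeasure μ] (hΦ : Integrable Φ μ) (hac : μ ≪ ρ)
    (hl : Integrable (llr μ ρ) μ) :
    Jgibbs ρ Φ μ = InformationTheory.klDiv μ (ρ.tilted fun z => -Φ z)
      + ENNReal.ofReal (-Real.log (∫ z, Real.exp (-Φ z) ∂ρ)) := by
  have hexp := integrable_exp_neg (ρ := ρ) hm h0
  have := isProbabilityMeasure_tilted hexp
  have hac' : μ ≪ ρ.tilted fun z => -Φ z := hac.trans (absolutelyContinuous_tilted hexp)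
  have hl' := integrable_llr_tilted_right hac hΦ.neg hl hexp
  have hneg : Integrable (fun z => -Φ z) μ := hΦ.neg
  have hi := integral_llr_tilted_right hac hneg hexp hl
  have hn := InformationTheory.integral_llr_add_sub_measure_univ_nonneg hac hl
  have hn' := InformationTheory.integral_llr_add_sub_measure_univ_nonneg hac' hl'
  have hlog : Real.log (∫ z, Real.exp (-Φ z) ∂ρ) ≤ 0 :=
    Real.log_nonpos (integral_nonneg fun _ => (Real.exp_pos _).le) hZ
  simp only [probReal_univ, add_sub_cancel_right] at hn hn'
  rw [integral_neg] at hi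
  rw [Jgibbs, KLe_eq_klDiv, InformationTheory.klDiv_of_ac_of_integrable hac hl,
    InformationTheory.klDiv_of_ac_of_integrable hac' hl',
    ← ofReal_integral_eq_lintegral_ofReal hΦ (Filter.Eventually.of_forall h0)]
  simp only [probReal_univ, add_sub_cancel_right]
  rw [← ENNReal.ofReal_add (integral_nonneg h0) hn, ← ENNReal.ofReal_add hn' (by linarith), hi]
  congr 1
  ring

/-- The potential has finite mean under its own Gibbs measure, because `t * exp (-t)` is bounded
for `t ≥ 0`. -/
lemma integrable_tilted_self (hm : Measurable Φ) (h0 : ∀ z, 0 ≤ Φ z) :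
    Integrable Φ (ρ.tilted fun z => -Φ z) := by
  rw [integrable_tilted_iff (integrable_exp_neg hm h0)]
  refine Integrable.of_bound (by fun_prop) 1 (Filter.Eventually.of_forall fun z => ?_)
  rw [smul_eq_mul, Real.norm_of_nonneg (mul_nonneg (Real.exp_pos _).le (h0 z)), Real.exp_neg,
    inv_mul_le_iff₀ (Real.exp_pos _)]
  linarith [Real.add_one_le_exp (Φ z)]

/-- Under the Gibbs measure the log-density is the affine function `-Φ - log 𝒵` of `Φ`, hence
integrable. -/
lemma integrable_llr_tilted_self (hm : Measurable Φ) (h0 : ∀ z, 0 ≤ Φ z) :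
    Integrable (llr (ρ.tilted fun z => -Φ z) ρ) (ρ.tilted fun z => -Φ z) := by
  have hexp := integrable_exp_neg (ρ := ρ) hm h0
  have := isProbabilityMeasure_tilted hexp
  have h : llr (ρ.tilted fun z => -Φ z) ρ =ᵐ[ρ.tilted fun z => -Φ z] _ :=
    (tilted_absolutelyContinuous ρ (fun z => -Φ z)).ae_le
      (log_rnDeriv_tilted_left_self (μ := ρ) hexp)
  exact ((integrable_tilted_self hm h0).neg.sub (integrable_const _)).congr h.symm

lemma Jgibbs_tilted (hm : Measurable Φ) (h0 : ∀ z, 0 ≤ Φ z)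
    (hZ : ∫ z, Real.exp (-Φ z) ∂ρ ≤ 1) :
    Jgibbs ρ Φ (ρ.tilted fun z => -Φ z)
      = ENNReal.ofReal (-Real.log (∫ z, Real.exp (-Φ z) ∂ρ)) := by
  have := isProbabilityMeasure_tilted (integrable_exp_neg (ρ := ρ) hm h0)
  rw [Jgibbs_eq_klDiv_tilted hm h0 hZ _ (integrable_tilted_self hm h0)
    (tilted_absolutelyContinuous ρ _) (integrable_llr_tilted_self hm h0),
    InformationTheory.klDiv_self, zero_add]

end Gibbs

/-- with `Φ(z) = (1/2)‖y − G(z)‖_Γ²`, `𝒵 = ∫ exp(−Φ) dμ_prior ∈ (0,1]`, and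
`dμ^y/dμ_prior = exp(−Φ)/𝒵`, the posterior `μ^y` is the unique minimizer of
`J(μ) = ∫ Φ dμ + KL(μ‖μ_prior)` over probability measures, with `J(μ^y) = −log 𝒵`. -/
theorem posterior_minimizes_gibbs {Z : Type*} [MeasurableSpace Z]
    (μprior : Measure Z) [IsProbabilityMeasure μprior]
    {d : ℕ} (Γ : Matrix (Fin d) (Fin d) ℝ) (hΓ : Γ.PosDef)
    (y : Fin d → ℝ) (G : Z → Fin d → ℝ) (hG : Measurable G)
    (Φ : Z → ℝ) (hΦ : Φ = fun z => (1 / 2) * wNormSq Γ (y - G z))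
    (Zc : ℝ) (hZc : Zc = ∫ z, Real.exp (-Φ z) ∂μprior)
    (μy : Measure Z)
    (hμy : μy = μprior.withDensity fun z => ENNReal.ofReal (Real.exp (-Φ z) / Zc)) :
    (0 < Zc ∧ Zc ≤ 1) ∧
    IsProbabilityMeasure μy ∧
    Jgibbs μprior Φ μy = ENNReal.ofReal (-Real.log Zc) ∧
    ∀ μ : Measure Z, IsProbabilityMeasure μ →
      Jgibbs μprior Φ μy ≤ Jgibbs μprior Φ μ ∧
      (Jgibbs μprior Φ μ = Jgibbs μprior Φ μy ↔ μ = μy) := by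
  have hm : Measurable Φ := by
    rw [hΦ]
    exact ((measurable_wNormSq Γ).comp (measurable_const.sub hG)).const_mul _
  have h0 : ∀ z, 0 ≤ Φ z := fun z => by
    rw [hΦ]
    exact mul_nonneg (by norm_num) (wNormSq_nonneg hΓ _)
  clear hΦ
  have hexp := integrable_exp_neg (ρ := μprior) hm h0
  have hZ1 : ∫ z, Real.exp (-Φ z) ∂μprior ≤ 1 := by
    have := integral_mono hexp (integrable_const (1 : ℝ)) fun z => by simpa using h0 z
    simpa using this
  have hprob := isProbabilityMeasure_tilted hexp
  have hμy' : μy = μprior.tilted fun z => -Φ z := by rw [hμy, hZc, Measure.tilted]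
  clear hμy
  subst hμy' hZc
  have hJ := Jgibbs_tilted hm h0 hZ1
  refine ⟨⟨integral_exp_pos hexp, hZ1⟩, hprob, hJ, fun μ hμ => ?_⟩
  rw [hJ]
  by_cases htop : Jgibbs μprior Φ μ = ⊤
  · refine ⟨htop ▸ le_top, fun h => absurd (h.symm.trans htop) ENNReal.ofReal_ne_top, ?_⟩
    rintro rfl
    exact hJ
  · have hsplit := htop
    rw [Jgibbs, ENNReal.add_eq_top, not_or, KLe_eq_klDiv] at hsplit
    obtain ⟨hac, hl⟩ := InformationTheory.klDiv_ne_top_iff.mp hsplit.2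
    have hint : Integrable Φ μ :=
      (lintegral_ofReal_ne_top_iff_integrable hm.aestronglyMeasurable
        (Filter.Eventually.of_forall h0)).mp hsplit.1
    rw [Jgibbs_eq_klDiv_tilted hm h0 hZ1 μ hint hac hl]
    refine ⟨le_add_self, ?_⟩
    rw [← InformationTheory.klDiv_eq_zero_iff (μ := μ)]
    refine ⟨fun h => ?_, fun h => by rw [h, zero_add]⟩
    exact (ENNReal.add_left_inj ENNReal.ofReal_ne_top).mp (h.trans (zero_add _).symm)
end
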